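/- Let ε > 0, Δ > 0, and let μ be a probability measure on ℝ² satisfying the ε-differential-privacy constraint with V(μ) = ∫_{ℝ²} ‖x‖₁ dμ(x) < +∞. For each positive integer i, let μ_i be the probability measure on ℝ² whose density with respect to Lebesgue measure is f_i(x) = μ(A_i(k)) / Vol(A_i(k)) for x ∈ A_i(k), k ∈ ℕ, where Vol denotes Lebesgue measure. Then each μ_i satisfies the ε-differential-privacy constraint, and lim_{i→∞} V(μ_i) = V(μ). (Lemma 1 for d = 2.) -/

import Mathlib

open MeasureTheory Real Filter
open scoped ENNReal Topology

noncomputable section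

/-- The ℓ¹ norm on ℝ². -/
def l1 (x : ℝ × ℝ) : ℝ := |x.1| + |x.2|

/-- The ε-differential-privacy constraint on a measure on ℝ² with sensitivity Δ. -/
def DPC (ε Δ : ℝ) (μ : Measure (ℝ × ℝ)) : Prop :=
  ∀ S : Set (ℝ × ℝ), MeasurableSet S → ∀ t : ℝ × ℝ, l1 t ≤ Δ →
    μ S ≤ ENNReal.ofReal (Real.exp ε) * μ ((· + t) '' S)

/-- Expected ℓ¹ cost of a noise distribution. -/
def cost (μ : Measure (ℝ × ℝ)) : ℝ≥0∞ := ∫⁻ x, ENNReal.ofReal (l1 x) ∂μ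

/-- The ℓ¹ layer A_i(k) = {x ∈ ℝ² : kΔ/i ≤ ‖x‖₁ < (k+1)Δ/i}. -/
def Aset (Δ : ℝ) (i k : ℕ) : Set (ℝ × ℝ) :=
  {x | (k : ℝ) * Δ / i ≤ l1 x ∧ l1 x < ((k : ℝ) + 1) * Δ / i}

/-- The index k such that x ∈ A_i(k). -/
def layerIdx (Δ : ℝ) (i : ℕ) (x : ℝ × ℝ) : ℕ := ⌊l1 x * i / Δ⌋₊

/-- The approximating measure μ_i, whose density w.r.t. Lebesgue measure equals
μ(A_i(k)) / Vol(A_i(k)) on each layer A_i(k). -/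
def approxMeasure (Δ : ℝ) (μ : Measure (ℝ × ℝ)) (i : ℕ) : Measure (ℝ × ℝ) :=
  MeasureTheory.volume.withDensity
    (fun x => μ (Aset Δ i (layerIdx Δ i x)) /
      MeasureTheory.volume (Aset Δ i (layerIdx Δ i x)))


lemma l1_continuous : Continuous l1 := by unfold l1; fun_prop

lemma l1_measurable : Measurable l1 := l1_continuous.measurable

lemma l1_nonneg (x : ℝ × ℝ) : 0 ≤ l1 x := by unfold l1; positivity

lemma Aset_measurable (Δ : ℝ) (i k : ℕ) : MeasurableSet (Aset Δ i k) :=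
  (measurableSet_le measurable_const l1_measurable).inter
    (measurableSet_lt l1_measurable measurable_const)

lemma layerIdx_measurable (Δ : ℝ) (i : ℕ) : Measurable (layerIdx Δ i) := by
  unfold layerIdx
  exact Nat.measurable_floor.comp ((l1_measurable.mul_const _).div_const _)

lemma mem_Aset_iff {Δ : ℝ} (hΔ : 0 < Δ) {i : ℕ} (hi : 1 ≤ i) (k : ℕ) (x : ℝ × ℝ) :
    x ∈ Aset Δ i k ↔ layerIdx Δ i x = k := by
  have hi' : (0 : ℝ) < i := by exact_mod_cast hi
  have h0 : 0 ≤ l1 x * i / Δ := by have := l1_nonneg x; positivity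
  unfold layerIdx Aset
  rw [Nat.floor_eq_iff h0, le_div_iff₀ hΔ, div_lt_iff₀ hΔ]
  simp only [Set.mem_ofPred_eq]
  rw [div_le_iff₀ hi', lt_div_iff₀ hi']

lemma layerIdx_preimage {Δ : ℝ} (hΔ : 0 < Δ) {i : ℕ} (hi : 1 ≤ i) (k : ℕ) :
    layerIdx Δ i ⁻¹' {k} = Aset Δ i k := by
  ext x; rw [mem_Aset_iff hΔ hi]; rfl

lemma map_layer_eq {Δ : ℝ} (hΔ : 0 < Δ) {i : ℕ} (hi : 1 ≤ i) {μ ν : Measure (ℝ × ℝ)}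
    (h : ∀ k, μ (Aset Δ i k) = ν (Aset Δ i k)) :
    μ.map (layerIdx Δ i) = ν.map (layerIdx Δ i) := by
  refine Measure.ext_of_singleton fun k => ?_
  rw [Measure.map_apply (layerIdx_measurable Δ i) (measurableSet_singleton k),
    Measure.map_apply (layerIdx_measurable Δ i) (measurableSet_singleton k),
    layerIdx_preimage hΔ hi, h]

lemma univ_eq_of_map {Δ : ℝ} (hΔ : 0 < Δ) {i : ℕ} (hi : 1 ≤ i) {μ ν : Measure (ℝ × ℝ)}
    (h : ∀ k, μ (Aset Δ i k) = ν (Aset Δ i k)) : μ Set.univ = ν Set.univ := by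
  have := congrArg (fun m => m Set.univ) (map_layer_eq hΔ hi h)
  simpa [Measure.map_apply (layerIdx_measurable Δ i) MeasurableSet.univ] using this

lemma cost_le {Δ : ℝ} (hΔ : 0 < Δ) {i : ℕ} (hi : 1 ≤ i) {μ ν : Measure (ℝ × ℝ)}
    (hμ : μ Set.univ = 1)
    (h : ∀ k, μ (Aset Δ i k) = ν (Aset Δ i k)) :
    cost μ ≤ cost ν + ENNReal.ofReal (Δ / i) := by
  have hi' : (0 : ℝ) < i := by exact_mod_cast hi
  have hm := layerIdx_measurable Δ i
  have key : ∫⁻ x, ENNReal.ofReal ((layerIdx Δ i x : ℝ) * Δ / i) ∂μ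
      = ∫⁻ x, ENNReal.ofReal ((layerIdx Δ i x : ℝ) * Δ / i) ∂ν := by
    have e : ∀ ρ : Measure (ℝ × ℝ), ∫⁻ x, ENNReal.ofReal ((layerIdx Δ i x : ℝ) * Δ / i) ∂ρ
      = ∫⁻ n : ℕ, ENNReal.ofReal ((n : ℝ) * Δ / i) ∂(ρ.map (layerIdx Δ i)) := fun ρ =>
        (lintegral_map (f := fun n : ℕ => ENNReal.ofReal ((n : ℝ) * Δ / i))
          (measurable_of_countable _) hm).symm
    rw [e, e, map_layer_eq hΔ hi h]
  have hA : ∀ x, x ∈ Aset Δ i (layerIdx Δ i x) := fun x => (mem_Aset_iff hΔ hi _ _).2 rfl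
  unfold cost
  calc ∫⁻ x, ENNReal.ofReal (l1 x) ∂μ
      ≤ ∫⁻ x, (ENNReal.ofReal ((layerIdx Δ i x : ℝ) * Δ / i) + ENNReal.ofReal (Δ / i)) ∂μ := by
        refine lintegral_mono fun x => ?_
        rw [← ENNReal.ofReal_add (by positivity) (by positivity)]
        apply ENNReal.ofReal_le_ofReal
        have := (hA x).2
        refine this.le.trans (le_of_eq ?_)
        ring
    _ = ∫⁻ x, ENNReal.ofReal ((layerIdx Δ i x : ℝ) * Δ / i) ∂ν + ENNReal.ofReal (Δ / i) := by
        rw [lintegral_add_right _ measurable_const, key]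
        simp [hμ]
    _ ≤ _ := by
        gcongr with x
        exact (hA x).1

lemma dp_ac {ε Δ : ℝ} (hΔ : 0 < Δ) {μ : Measure (ℝ × ℝ)} [IsProbabilityMeasure μ]
    (hdp : DPC ε Δ μ) : μ ≪ volume := by
  refine Measure.AbsolutelyContinuous.mk fun N hN hN0 => ?_
  have hmeas : MeasurableSet {p : (ℝ × ℝ) × (ℝ × ℝ) | p.2 - p.1 ∈ N} :=
    hN.preimage (measurable_snd.sub measurable_fst)
  have h1 : (volume.prod μ) {p : (ℝ × ℝ) × (ℝ × ℝ) | p.2 - p.1 ∈ N} = 0 := by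
    rw [Measure.prod_apply_symm hmeas]
    refine lintegral_eq_zero_of_ae_eq_zero (Eventually.of_forall fun x => ?_)
    show volume ((fun t => x - t) ⁻¹' N) = 0
    rw [(Measure.measurePreserving_sub_left volume x).measure_preimage hN.nullMeasurableSet, hN0]
  have h2 := (Measure.measure_prod_null hmeas).1 h1
  have h3 : ∃ t : ℝ × ℝ, l1 t ≤ Δ ∧ μ ((fun x => x - t) ⁻¹' N) = 0 := by
    by_contra hcon
    push Not at hcon
    have hsub : {t : ℝ × ℝ | l1 t < Δ} ⊆ {t | ¬ (μ ((fun x => x - t) ⁻¹' N) = 0)} :=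
      fun t ht => hcon t (le_of_lt ht)
    have hz : volume {t : ℝ × ℝ | l1 t < Δ} = 0 := measure_mono_null hsub h2
    have hopen : IsOpen {t : ℝ × ℝ | l1 t < Δ} := isOpen_lt l1_continuous continuous_const
    exact (hopen.measure_pos volume ⟨0, by simpa [l1] using hΔ⟩).ne' hz
  obtain ⟨t, ht, h0⟩ := h3
  have := hdp N hN t ht
  rw [Set.image_add_right] at this
  simp only [sub_eq_add_neg] at h0
  rw [h0, mul_zero] at this
  exact le_antisymm this bot_le

lemma dp_density {ε Δ : ℝ} (hΔ : 0 < Δ) {μ : Measure (ℝ × ℝ)} [IsProbabilityMeasure μ]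
    (hdp : DPC ε Δ μ) : ∃ g : ℝ × ℝ → ℝ≥0∞, Measurable g ∧ μ = volume.withDensity g ∧
      ∀ x t, l1 t ≤ Δ → g x ≤ ENNReal.ofReal (Real.exp ε) * g (x + t) := by
  let r : ℕ → ℝ := fun n => 1 / ((n : ℝ) + 1)
  let q : ℕ → ℝ × ℝ → ℝ≥0∞ := fun n x =>
    μ (Metric.closedBall x (r n)) / volume (Metric.closedBall x (r n))
  have hball : ∀ (ν : Measure (ℝ × ℝ)) [SFinite ν] (s : ℝ),
      Measurable fun x => ν (Metric.closedBall x s) := by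
    intro ν _ s
    have : MeasurableSet {p : (ℝ × ℝ) × (ℝ × ℝ) | dist p.2 p.1 ≤ s} :=
      measurableSet_le (measurable_snd.dist measurable_fst) measurable_const
    exact measurable_measure_prodMk_left this
  refine ⟨fun x => limsup (fun n => q n x) atTop, ?_, ?_, ?_⟩
  · exact Measurable.limsup fun n => (hball μ _).div (hball volume _)
  · have hr : Tendsto r atTop (𝓝[>] 0) := by
      refine tendsto_nhdsWithin_iff.2 ⟨tendsto_one_div_add_atTop_nhds_zero_nat, ?_⟩
      exact Eventually.of_forall fun n => by show (0:ℝ) < 1 / ((n : ℝ) + 1); positivity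
    have hae : (fun x => limsup (fun n => q n x) atTop) =ᵐ[volume] μ.rnDeriv volume := by
      filter_upwards [Besicovitch.ae_tendsto_rnDeriv μ (volume : Measure (ℝ × ℝ))] with x hx
      exact (hx.comp hr).limsup_eq
    rw [withDensity_congr_ae hae, Measure.withDensity_rnDeriv_eq _ _ (dp_ac hΔ hdp)]
  · intro x t ht
    show limsup (fun n => q n x) atTop ≤ _ * limsup (fun n => q n (x + t)) atTop
    rw [← ENNReal.limsup_const_mul_of_ne_top ENNReal.ofReal_ne_top]
    refine limsup_le_limsup (Eventually.of_forall fun n => ?_)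
    show μ _ / _ ≤ _ * (μ _ / _)
    have hv : volume (Metric.closedBall (x + t) (r n)) = volume (Metric.closedBall x (r n)) := by
      rw [Measure.addHaar_closedBall_center, Measure.addHaar_closedBall_center volume x]
    have hd := hdp (Metric.closedBall x (r n)) Metric.isClosed_closedBall.measurableSet t ht
    have himg : (· + t) '' Metric.closedBall x (r n) = Metric.closedBall (x + t) (r n) := by
      ext y
      simp [Set.image_add_right, dist_eq_norm]
    rw [himg] at hd
    rw [hv, ← mul_div_assoc]
    gcongr

lemma phi_bound {b : ℝ} (hb : 0 < b) (k m : ℕ) {ρ p : ℝ}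
    (h1 : k * b < ρ) (h2 : ρ < (k + 1) * b) (hp1 : m * b < p) (hp2 : p < (m + 1) * b)
    (hp : (2 * (k : ℝ) + 1) * (p ^ 2 - (m * b) ^ 2) = (2 * m + 1) * (ρ ^ 2 - (k * b) ^ 2)) :
    |p - ρ| ≤ |(m : ℝ) - k| * b := by
  have hk : (0 : ℝ) ≤ k := by positivity
  have hm : (0 : ℝ) ≤ m := by positivity
  have hkb : (0 : ℝ) ≤ k * b := by positivity
  have hmb : (0 : ℝ) ≤ m * b := by positivity
  set σ := ρ - k * b with hσ
  have hσ0 : 0 < σ := by linarith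
  have hσ1 : σ < b := by linarith
  have hρ : ρ = k * b + σ := by linarith
  -- comparison of p with m b + σ
  have hcmp : (2 * (k : ℝ) + 1) * (p ^ 2 - (m * b + σ) ^ 2) = 2 * (m - k) * σ * (σ - b) := by
    rw [hρ] at hp
    linear_combination hp
  rcases lt_trichotomy k m with h | h | h
  · have h' : (k : ℝ) + 1 ≤ m := by exact_mod_cast h
    have hge : ρ ≤ p := by nlinarith
    rw [abs_of_nonneg (by linarith), abs_of_nonneg (by linarith)]
    have : p ^ 2 - (m * b + σ) ^ 2 ≤ 0 := by
      by_contra hc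
      push Not at hc
      have e1 : 0 < (2 * (k : ℝ) + 1) * (p ^ 2 - (m * b + σ) ^ 2) := by positivity
      have e2 : 0 ≤ 2 * ((m : ℝ) - k) * σ * (b - σ) :=
        mul_nonneg (mul_nonneg (by linarith) hσ0.le) (by linarith)
      nlinarith
    have : p ≤ m * b + σ := abs_le_of_sq_le_sq' (by linarith) (by linarith) |>.2
    linarith
  · subst h
    have : p ^ 2 = (k * b + σ) ^ 2 := by
      have : (2 * (k : ℝ) + 1) * (p ^ 2 - (k * b + σ) ^ 2) = 0 := by rw [hcmp]; ring
      rcases mul_eq_zero.1 this with h | h <;> linarith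
    have : p = k * b + σ := (sq_eq_sq₀ (by linarith) (by linarith)).1 this
    rw [this, ← hρ]; simp
  · have h' : (m : ℝ) + 1 ≤ k := by exact_mod_cast h
    have hge : p ≤ ρ := by nlinarith
    rw [abs_of_nonpos (by linarith), abs_of_nonpos (by linarith)]
    have : 0 ≤ p ^ 2 - (m * b + σ) ^ 2 := by
      by_contra hc
      push Not at hc
      have e1 : (2 * (k : ℝ) + 1) * (p ^ 2 - (m * b + σ) ^ 2) < 0 :=
        mul_neg_of_pos_of_neg (by positivity) hc
      have e2 : 0 ≤ 2 * ((k : ℝ) - m) * σ * (b - σ) :=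
        mul_nonneg (mul_nonneg (by linarith) hσ0.le) (by linarith)
      nlinarith
    have : m * b + σ ≤ p := abs_le_of_sq_le_sq' (by linarith) (by linarith) |>.2
    linarith

lemma radial_le {b : ℝ} (hb : 0 < b) (k m : ℕ) (G : ℝ → ℝ≥0∞) {c : ℝ≥0∞} (hc : c ≠ ⊤)
    (hG : ∀ r s, |s - r| ≤ |(m : ℝ) - k| * b → G r ≤ c * G s) :
    ENNReal.ofReal ((2 * m + 1) / (2 * k + 1)) *
      ∫⁻ r in Set.Ico (k * b) ((k + 1) * b), ENNReal.ofReal r * G r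
      ≤ c * ∫⁻ r in Set.Ico (m * b) ((m + 1) * b), ENNReal.ofReal r * G r := by
  have hk : (0 : ℝ) ≤ k := by positivity
  have hm : (0 : ℝ) ≤ m := by positivity
  have hkb : (0 : ℝ) ≤ k * b := by positivity
  have hmb : (0 : ℝ) ≤ m * b := by positivity
  rw [← setLIntegral_congr Ioo_ae_eq_Ico, ← setLIntegral_congr Ioo_ae_eq_Ico]
  set β : ℝ := (2 * m + 1) / (2 * k + 1) with hβ
  have hβ0 : 0 < β := by positivity
  have hβk : β * (2 * k + 1) = 2 * m + 1 := by rw [hβ]; field_simp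
  set q : ℝ → ℝ := fun ρ => (m * b) ^ 2 + β * (ρ ^ 2 - (k * b) ^ 2) with hq
  set φ : ℝ → ℝ := fun ρ => Real.sqrt (q ρ) with hφ
  have hqlt : ∀ ρ ∈ Set.Ioo (k * b) ((k + 1) * b), (m * b) ^ 2 < q ρ := by
    intro ρ hρ
    have : 0 < ρ ^ 2 - (k * b) ^ 2 := by nlinarith [hρ.1]
    have := mul_pos hβ0 this
    simp only [hq]; linarith
  have hqgt : ∀ ρ ∈ Set.Ioo (k * b) ((k + 1) * b), q ρ < ((m + 1) * b) ^ 2 := by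
    intro ρ hρ
    have : 0 < ((k + 1) * b) ^ 2 - ρ ^ 2 := by nlinarith [hρ.1, hρ.2]
    have := mul_pos hβ0 this
    have e : β * (((k + 1) * b) ^ 2 - (k * b) ^ 2) = (2 * m + 1) * b ^ 2 := by
      rw [← hβk]; ring
    simp only [hq]; nlinarith
  have hq0 : ∀ ρ ∈ Set.Ioo (k * b) ((k + 1) * b), 0 < q ρ := fun ρ hρ =>
    lt_of_le_of_lt (by positivity) (hqlt ρ hρ)
  have hmaps : φ '' Set.Ioo (k * b) ((k + 1) * b) ⊆ Set.Ioo (m * b) ((m + 1) * b) := by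
    rintro _ ⟨ρ, hρ, rfl⟩
    exact ⟨Real.lt_sqrt_of_sq_lt (hqlt ρ hρ), (Real.sqrt_lt' (by positivity)).2 (hqgt ρ hρ)⟩
  have hder : ∀ ρ ∈ Set.Ioo (k * b) ((k + 1) * b),
      HasDerivWithinAt φ (β * ρ / φ ρ) (Set.Ioo (k * b) ((k + 1) * b)) ρ := by
    intro ρ hρ
    have h1 : HasDerivAt q (β * (2 * ρ)) ρ := by
      have := (((hasDerivAt_pow 2 ρ).sub_const ((k * b) ^ 2)).const_mul β).const_add ((m * b) ^ 2)
      refine this.congr_deriv ?_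
      norm_num
    have h2 := h1.sqrt (hq0 ρ hρ).ne'
    refine (h2.congr_deriv ?_).hasDerivWithinAt
    show _ = β * ρ / √(q ρ)
    rw [show β * (2 * ρ) = 2 * (β * ρ) by ring, mul_div_mul_left _ _ two_ne_zero]
  have hinj : Set.InjOn φ (Set.Ioo (k * b) ((k + 1) * b)) := by
    intro x hx y hy hxy
    have h1 : q x = q y := (Real.sqrt_inj (hq0 x hx).le (hq0 y hy).le).1 hxy
    have h2 : x ^ 2 = y ^ 2 := by
      have : β * (x ^ 2 - y ^ 2) = 0 := by simp only [hq] at h1; linarith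
      rcases mul_eq_zero.1 this with h | h
      · exact absurd h hβ0.ne'
      · linarith
    exact (sq_eq_sq₀ (by linarith [hx.1]) (by linarith [hy.1])).1 h2
  calc ENNReal.ofReal β * ∫⁻ r in Set.Ioo (k * b) ((k + 1) * b), ENNReal.ofReal r * G r
      = ∫⁻ r in Set.Ioo (k * b) ((k + 1) * b), ENNReal.ofReal β * (ENNReal.ofReal r * G r) :=
        (lintegral_const_mul' _ _ ENNReal.ofReal_ne_top).symm
    _ ≤ ∫⁻ r in Set.Ioo (k * b) ((k + 1) * b),
          c * (ENNReal.ofReal |β * r / φ r| * (ENNReal.ofReal (φ r) * G (φ r))) := by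
        refine setLIntegral_mono' measurableSet_Ioo fun r hr => ?_
        have hφ0 : 0 < φ r := Real.sqrt_pos.2 (hq0 r hr)
        have hr0 : 0 < r := by linarith [hr.1]
        have hmem := hmaps ⟨r, hr, rfl⟩
        have hg := hG r (φ r) (phi_bound hb k m hr.1 hr.2 hmem.1 hmem.2 (by
          simp only [hφ]
          rw [Real.sq_sqrt (hq0 r hr).le, ← hβk]
          simp only [hq]; ring))
        rw [abs_of_nonneg (by positivity), ← mul_assoc, ← mul_assoc (ENNReal.ofReal (β * r / φ r)),
          ← ENNReal.ofReal_mul hβ0.le, ← ENNReal.ofReal_mul (by positivity),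
          div_mul_cancel₀ _ hφ0.ne', mul_left_comm]
        gcongr
    _ = c * ∫⁻ r in φ '' Set.Ioo (k * b) ((k + 1) * b), ENNReal.ofReal r * G r := by
        rw [lintegral_const_mul' _ _ hc,
          lintegral_image_eq_lintegral_abs_deriv_mul measurableSet_Ioo hder hinj]
    _ ≤ _ := by
        gcongr

lemma polar_Aset {w : ℝ} (hw : 0 < w) (k : ℕ) (g : ℝ × ℝ → ℝ≥0∞) (hg : Measurable g) :
    ∫⁻ x in {x | (k : ℝ) * w ≤ l1 x ∧ l1 x < ((k : ℝ) + 1) * w}, g x =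
      ∫⁻ θ in Set.Ioo (-π) π, ∫⁻ r in Set.Ico (k * (w / (|cos θ| + |sin θ|)))
        ((k + 1) * (w / (|cos θ| + |sin θ|))),
          ENNReal.ofReal r * g (r * cos θ, r * sin θ) := by
  have hA : MeasurableSet {x : ℝ × ℝ | (k : ℝ) * w ≤ l1 x ∧ l1 x < ((k : ℝ) + 1) * w} :=
    (measurableSet_le measurable_const l1_measurable).inter
      (measurableSet_lt l1_measurable measurable_const)
  have hgm := hg.indicator hA
  rw [← lintegral_indicator hA, ← lintegral_comp_polarCoord_symm]
  simp only [polarCoord_target, polarCoord_symm_apply, smul_eq_mul]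
  rw [Measure.volume_eq_prod, setLIntegral_prod_symm]
  · refine lintegral_congr fun θ => ?_
    have ha : 0 < |cos θ| + |sin θ| := by
      by_contra h
      have h1 := abs_nonneg (cos θ)
      have h2 := abs_nonneg (sin θ)
      have h3 : cos θ = 0 := abs_eq_zero.1 (by linarith)
      have h4 : sin θ = 0 := abs_eq_zero.1 (by linarith)
      have := sin_sq_add_cos_sq θ
      rw [h3, h4] at this
      norm_num at this
    set a := |cos θ| + |sin θ| with hadef
    have hl : ∀ r : ℝ, 0 ≤ r → l1 (r * cos θ, r * sin θ) = r * a := by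
      intro r hr
      simp only [l1, abs_mul, abs_of_nonneg hr, hadef]; ring
    have hmem : ∀ r : ℝ, 0 < r → ((r * cos θ, r * sin θ) ∈
        {x : ℝ × ℝ | (k : ℝ) * w ≤ l1 x ∧ l1 x < ((k : ℝ) + 1) * w} ↔
          r ∈ Set.Ico (k * (w / a)) ((k + 1) * (w / a))) := by
      intro r hr
      simp only [Set.mem_ofPred_eq, Set.mem_Ico]
      rw [hl r hr.le, ← mul_div_assoc, ← mul_div_assoc, div_le_iff₀ ha, lt_div_iff₀ ha]
    rw [← lintegral_indicator measurableSet_Ioi, ← lintegral_indicator measurableSet_Ico]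
    refine lintegral_congr fun r => ?_
    by_cases hr : 0 < r
    · rw [Set.indicator_of_mem (Set.mem_Ioi.2 hr)]
      by_cases hI : r ∈ Set.Ico (k * (w / a)) ((k + 1) * (w / a))
      · rw [Set.indicator_of_mem hI, Set.indicator_of_mem ((hmem r hr).2 hI)]
      · rw [Set.indicator_of_notMem hI, Set.indicator_of_notMem (fun h => hI ((hmem r hr).1 h)),
          mul_zero]
    · rw [Set.indicator_of_notMem (s := Set.Ioi (0 : ℝ)) (fun h => hr (Set.mem_Ioi.1 h))]
      symm
      refine Set.indicator_apply_eq_zero.2 fun _ => ?_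
      rw [ENNReal.ofReal_of_nonpos (not_lt.1 hr), zero_mul]
  · refine Measurable.aemeasurable ?_
    refine (ENNReal.measurable_ofReal.comp measurable_fst).mul (hgm.comp ?_)
    fun_prop

lemma layer_le {w : ℝ} (hw : 0 < w) (k m : ℕ) (g : ℝ × ℝ → ℝ≥0∞) (hg : Measurable g)
    {c : ℝ≥0∞} (hc : c ≠ ⊤)
    (hG : ∀ x t, l1 t ≤ |(m : ℝ) - k| * w → g x ≤ c * g (x + t)) :
    ENNReal.ofReal ((2 * m + 1) / (2 * k + 1)) *
      ∫⁻ x in {x | (k : ℝ) * w ≤ l1 x ∧ l1 x < ((k : ℝ) + 1) * w}, g x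
      ≤ c * ∫⁻ x in {x | (m : ℝ) * w ≤ l1 x ∧ l1 x < ((m : ℝ) + 1) * w}, g x := by
  rw [polar_Aset hw k g hg, polar_Aset hw m g hg, ← lintegral_const_mul' _ _ hc,
    ← lintegral_const_mul' _ _ ENNReal.ofReal_ne_top]
  refine lintegral_mono fun θ => ?_
  have ha : 0 < |cos θ| + |sin θ| := by
    by_contra h
    have h1 := abs_nonneg (cos θ)
    have h2 := abs_nonneg (sin θ)
    have h3 : cos θ = 0 := abs_eq_zero.1 (by linarith)
    have h4 : sin θ = 0 := abs_eq_zero.1 (by linarith)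
    have := sin_sq_add_cos_sq θ
    rw [h3, h4] at this
    norm_num at this
  refine radial_le (div_pos hw ha) k m (fun r => g (r * cos θ, r * sin θ)) hc fun r s hrs => ?_
  have := hG (r * cos θ, r * sin θ) ((s - r) * cos θ, (s - r) * sin θ) (by
    simp only [l1, abs_mul]
    rw [← mul_add]
    rw [← mul_div_assoc, le_div_iff₀ ha] at hrs
    exact hrs)
  convert this using 3
  ext <;> simp <;> ring

lemma Aset_eq (Δ : ℝ) (i k : ℕ) :
    Aset Δ i k = {x | (k : ℝ) * (Δ / i) ≤ l1 x ∧ l1 x < ((k : ℝ) + 1) * (Δ / i)} := by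
  simp only [Aset, mul_div_assoc]

lemma Aset_vol_le {Δ : ℝ} (hΔ : 0 < Δ) {i : ℕ} (hi : 1 ≤ i) (k m : ℕ) :
    ENNReal.ofReal ((2 * m + 1) / (2 * k + 1)) * volume (Aset Δ i k) ≤ volume (Aset Δ i m) := by
  have hi' : (0 : ℝ) < i := by exact_mod_cast hi
  have := layer_le (w := Δ / i) (by positivity) k m (fun _ => 1) measurable_const
    ENNReal.one_ne_top (by simp)
  rw [← Aset_eq, ← Aset_eq] at this
  simpa using this

lemma Aset_vol_ne_top {Δ : ℝ} (i k : ℕ) : volume (Aset Δ i k) ≠ ⊤ := by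
  have : Aset Δ i k ⊆ Metric.closedBall 0 (((k : ℝ) + 1) * Δ / i) := by
    intro x hx
    rw [mem_closedBall_zero_iff, Prod.norm_def]
    have := hx.2.le
    unfold l1 at this
    exact max_le (by rw [Real.norm_eq_abs]; linarith [abs_nonneg x.2])
      (by rw [Real.norm_eq_abs]; linarith [abs_nonneg x.1])
  exact ((measure_mono this).trans_lt Metric.isBounded_closedBall.measure_lt_top).ne

lemma Aset_vol_ne_zero {Δ : ℝ} (hΔ : 0 < Δ) {i : ℕ} (hi : 1 ≤ i) (k : ℕ) :
    volume (Aset Δ i k) ≠ 0 := by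
  have hi' : (0 : ℝ) < i := by exact_mod_cast hi
  have h0 : 0 < volume (Aset Δ i 0) := by
    have : Aset Δ i 0 = {x | l1 x < Δ / i} := by
      ext x; simp [Aset, l1_nonneg]
    rw [this]
    exact (isOpen_lt l1_continuous continuous_const).measure_pos volume
      ⟨0, by simp [l1]; positivity⟩
  refine (lt_of_lt_of_le (ENNReal.mul_pos ?_ h0.ne') (Aset_vol_le hΔ hi 0 k)).ne'
  exact (ENNReal.ofReal_pos.2 (by positivity)).ne'

lemma density_le {ε Δ : ℝ} (hΔ : 0 < Δ) {μ : Measure (ℝ × ℝ)} [IsProbabilityMeasure μ]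
    (hdp : DPC ε Δ μ) {i : ℕ} (hi : 1 ≤ i) (k m : ℕ) (hkm : |(m : ℝ) - k| ≤ i) :
    μ (Aset Δ i k) / volume (Aset Δ i k) ≤
      ENNReal.ofReal (Real.exp ε) * (μ (Aset Δ i m) / volume (Aset Δ i m)) := by
  have hi' : (0 : ℝ) < i := by exact_mod_cast hi
  obtain ⟨g, hg, hμg, hgle⟩ := dp_density hΔ hdp
  have h1 := layer_le (w := Δ / i) (by positivity) k m g hg (c := ENNReal.ofReal (Real.exp ε))
    ENNReal.ofReal_ne_top (fun x t ht => hgle x t (ht.trans (by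
      calc |(m : ℝ) - k| * (Δ / i) ≤ i * (Δ / i) := by gcongr
        _ = Δ := by field_simp)))
  rw [← Aset_eq, ← Aset_eq, ← withDensity_apply _ (Aset_measurable _ _ _),
    ← withDensity_apply _ (Aset_measurable _ _ _), ← hμg] at h1
  have h2 := Aset_vol_le hΔ hi m k
  set B := ENNReal.ofReal ((2 * (m : ℝ) + 1) / (2 * k + 1)) with hB
  set B' := ENNReal.ofReal ((2 * (k : ℝ) + 1) / (2 * m + 1)) with hB'
  have hBB : B' * B = 1 := by
    rw [hB, hB', ← ENNReal.ofReal_mul (by positivity)]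
    rw [show (2 * (k : ℝ) + 1) / (2 * m + 1) * ((2 * (m : ℝ) + 1) / (2 * k + 1)) = 1 by field_simp]
    simp
  rw [← mul_div_assoc]
  have hkt := Aset_vol_ne_top (Δ := Δ) i k
  have hmt := Aset_vol_ne_top (Δ := Δ) i m
  have hk0 := Aset_vol_ne_zero hΔ hi k
  have hm0 := Aset_vol_ne_zero hΔ hi m
  rw [ENNReal.le_div_iff_mul_le (Or.inl hm0) (Or.inl hmt)]
  calc μ (Aset Δ i k) / volume (Aset Δ i k) * volume (Aset Δ i m)
      = (μ (Aset Δ i k) / volume (Aset Δ i k)) * ((B' * volume (Aset Δ i m)) * B) := by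
        rw [mul_right_comm B', hBB, one_mul]
    _ ≤ (μ (Aset Δ i k) / volume (Aset Δ i k)) * (volume (Aset Δ i k) * B) := by gcongr
    _ = B * μ (Aset Δ i k) := by
        rw [← mul_assoc, ENNReal.div_mul_cancel hk0 hkt, mul_comm]
    _ ≤ _ := h1

lemma approx_Aset {Δ : ℝ} (hΔ : 0 < Δ) (μ : Measure (ℝ × ℝ)) {i : ℕ} (hi : 1 ≤ i) (k : ℕ) :
    approxMeasure Δ μ i (Aset Δ i k) = μ (Aset Δ i k) := by
  unfold approxMeasure
  rw [withDensity_apply _ (Aset_measurable _ _ _)]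
  rw [setLIntegral_congr_fun (g := fun _ => μ (Aset Δ i k) / volume (Aset Δ i k))
    (Aset_measurable _ _ _) (fun x hx => by
      have := (mem_Aset_iff hΔ hi k x).1 hx
      simp only [this])]
  rw [setLIntegral_const, ENNReal.div_mul_cancel (Aset_vol_ne_zero hΔ hi k) (Aset_vol_ne_top i k)]

lemma approx_dp {ε Δ : ℝ} (hΔ : 0 < Δ) {μ : Measure (ℝ × ℝ)} [IsProbabilityMeasure μ]
    (hdp : DPC ε Δ μ) {i : ℕ} (hi : 1 ≤ i) : DPC ε Δ (approxMeasure Δ μ i) := by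
  have hi' : (0 : ℝ) < i := by exact_mod_cast hi
  intro S hS t ht
  have himg : MeasurableSet ((· + t) '' S) := (MeasurableEquiv.addRight t).measurableSet_image.2 hS
  unfold approxMeasure
  rw [withDensity_apply _ hS, withDensity_apply _ himg,
    ← (measurePreserving_add_right volume t).setLIntegral_comp_emb
      (MeasurableEquiv.addRight t).measurableEmbedding,
    ← lintegral_const_mul' _ _ ENNReal.ofReal_ne_top]
  refine lintegral_mono fun x => ?_
  apply density_le hΔ hdp hi
  have htri : |l1 (x + t) - l1 x| ≤ Δ := by
    refine le_trans ?_ ht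
    unfold l1
    simp only [Prod.fst_add, Prod.snd_add]
    have a1 := abs_abs_sub_abs_le_abs_sub (x.1 + t.1) x.1
    have a2 := abs_abs_sub_abs_le_abs_sub (x.2 + t.2) x.2
    rw [add_sub_cancel_left] at a1 a2
    rw [abs_le] at a1 a2 ⊢
    constructor <;> linarith [a1.1, a1.2, a2.1, a2.2]
  have hx0 := l1_nonneg x
  have hy0 := l1_nonneg (x + t)
  have floor_le : ∀ u v : ℝ, 0 ≤ u → 0 ≤ v → u - v ≤ Δ →
      (⌊u * i / Δ⌋₊ : ℝ) - ⌊v * i / Δ⌋₊ ≤ i := by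
    intro u v hu hv huv
    have : u * i / Δ ≤ v * i / Δ + (i : ℕ) := by
      rw [div_le_iff₀ hΔ, add_mul, div_mul_cancel₀ _ hΔ.ne']
      nlinarith
    have h2 := Nat.floor_le_floor this
    rw [Nat.floor_add_natCast (by positivity)] at h2
    have h3 : (⌊u * i / Δ⌋₊ : ℝ) ≤ ⌊v * i / Δ⌋₊ + i := by exact_mod_cast h2
    linarith
  rw [abs_le] at htri ⊢
  unfold layerIdx
  constructor
  · linarith [floor_le (l1 x) (l1 (x + t)) hx0 hy0 (by linarith [htri.1])]
  · exact floor_le (l1 (x + t)) (l1 x) hy0 hx0 htri.2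

/-- Lemma 1 (d = 2): each layer-averaged measure μ_i is a probability measure
satisfying the ε-differential-privacy constraint, and V(μ_i) → V(μ). -/
theorem approx_preserves_dp_and_cost (ε Δ : ℝ) (hε : 0 < ε) (hΔ : 0 < Δ)
    (μ : Measure (ℝ × ℝ)) (hμ : IsProbabilityMeasure μ) (hdp : DPC ε Δ μ)
    (hfin : cost μ < ⊤) :
    (∀ i : ℕ, 1 ≤ i →
      IsProbabilityMeasure (approxMeasure Δ μ i) ∧ DPC ε Δ (approxMeasure Δ μ i)) ∧
    Tendsto (fun i : ℕ => cost (approxMeasure Δ μ i)) atTop (nhds (cost μ)) := by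

  have hone : ∀ i : ℕ, 1 ≤ i → approxMeasure Δ μ i Set.univ = 1 := fun i hi => by
    rw [univ_eq_of_map hΔ hi (approx_Aset hΔ μ hi), measure_univ]
  refine ⟨fun i hi => ⟨⟨hone i hi⟩, approx_dp hΔ hdp hi⟩, ?_⟩
  have hw : Tendsto (fun i : ℕ => ENNReal.ofReal (Δ / i)) atTop (𝓝 0) := by
    have := ENNReal.tendsto_ofReal (tendsto_const_div_atTop_nhds_zero_nat Δ)
    rwa [ENNReal.ofReal_zero] at this
  have hlow : Tendsto (fun i : ℕ => cost μ - ENNReal.ofReal (Δ / i)) atTop (𝓝 (cost μ)) := by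
    have := ENNReal.Tendsto.sub (tendsto_const_nhds (x := cost μ) (f := atTop)) hw
      (Or.inl hfin.ne)
    rwa [tsub_zero] at this
  have hup : Tendsto (fun i : ℕ => cost μ + ENNReal.ofReal (Δ / i)) atTop (𝓝 (cost μ)) := by
    have := (tendsto_const_nhds (x := cost μ) (f := atTop)).add hw
    rwa [add_zero] at this
  refine tendsto_of_tendsto_of_tendsto_of_le_of_le' hlow hup ?_ ?_
  · filter_upwards [eventually_ge_atTop 1] with i hi
    exact tsub_le_iff_right.2 (cost_le hΔ hi measure_univ fun k => (approx_Aset hΔ μ hi k).symm)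
  · filter_upwards [eventually_ge_atTop 1] with i hi
    exact cost_le hΔ hi (hone i hi) (approx_Aset hΔ μ hi)
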